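/- Let X be a complex Banach space and p ∈ [1,∞]. Suppose there exist η ∈ (0,1) and d ∈ ℕ such that for every n ∈ ℕ with d ≤ n, every function f : {-1,1}^n → X of degree at most d satisfies ‖Δf‖_{L_p({-1,1}^n;X)} ≤ (1−η) d² ‖f‖_{L_p({-1,1}^n;X)}. Then X has finite cotype, i.e. X has cotype q for some q ∈ [2,∞). -/

import Mathlib

open scoped BigOperators ENNReal NNReal

noncomputable section

namespace HammingCube

variable {X : Type*} [NormedAddCommGroup X] [NormedSpace ℂ X]

/-- The sign ±1 associated to a boolean coordinate. -/
def sgn (b : Bool) : ℝ := if b then 1 else -1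

/-- The Walsh function `w_A(ε) = ∏_{i ∈ A} ε_i`. -/
def walsh {n : ℕ} (A : Finset (Fin n)) (ε : Fin n → Bool) : ℝ := ∏ i ∈ A, sgn (ε i)

/-- The Fourier–Walsh coefficient `f̂(A) = 2⁻ⁿ ∑_δ f(δ) w_A(δ)`. -/
def coeff {n : ℕ} (f : (Fin n → Bool) → X) (A : Finset (Fin n)) : X :=
  (2 ^ n : ℝ)⁻¹ • ∑ δ : Fin n → Bool, walsh A δ • f δ

/-- `f` has degree at most `d`: `f̂(A) = 0` whenever `|A| > d`. -/
def degLE {n : ℕ} (f : (Fin n → Bool) → X) (d : ℕ) : Prop :=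
  ∀ A : Finset (Fin n), d < A.card → coeff f A = 0

/-- `f` belongs to the `d`-th tail space: `f̂(A) = 0` whenever `|A| < d`. -/
def tailSpace {n : ℕ} (f : (Fin n → Bool) → X) (d : ℕ) : Prop :=
  ∀ A : Finset (Fin n), A.card < d → coeff f A = 0

/-- The heat semigroup `e^{-tΔ} f = ∑_A e^{-t|A|} f̂(A) w_A`. -/
def heat {n : ℕ} (t : ℝ) (f : (Fin n → Bool) → X) : (Fin n → Bool) → X :=
  fun ε => ∑ A : Finset (Fin n), Real.exp (-t * A.card) • walsh A ε • coeff f A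

/-- The hypercube Laplacian `Δ f = ∑_A |A| f̂(A) w_A`. -/
def lap {n : ℕ} (f : (Fin n → Bool) → X) : (Fin n → Bool) → X :=
  fun ε => ∑ A : Finset (Fin n), (A.card : ℝ) • walsh A ε • coeff f A

/-- The fractional Laplacian `Δ^γ f = ∑_A |A|^γ f̂(A) w_A`. -/
def fracLap {n : ℕ} (γ : ℝ) (f : (Fin n → Bool) → X) : (Fin n → Bool) → X :=
  fun ε => ∑ A : Finset (Fin n), ((A.card : ℝ) ^ γ) • walsh A ε • coeff f A

/-- The `i`-th discrete partial derivative. -/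
def pderiv {n : ℕ} (i : Fin n) (f : (Fin n → Bool) → X) : (Fin n → Bool) → X :=
  fun ε => (2 : ℝ)⁻¹ • (f ε - f (Function.update ε i (!(ε i))))

/-- The vector-valued `L_p` norm `(2⁻ⁿ ∑_ε ‖f(ε)‖^p)^{1/p}` for finite `p`. -/
def lpNorm {n : ℕ} {Y : Type*} [NormedAddCommGroup Y] (p : ℝ)
    (f : (Fin n → Bool) → Y) : ℝ :=
  ((2 ^ n : ℝ)⁻¹ * ∑ ε : Fin n → Bool, ‖f ε‖ ^ p) ^ (1 / p)

/-- The `L_∞` norm `max_ε ‖f(ε)‖`. -/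
def linfNorm {n : ℕ} {Y : Type*} [NormedAddCommGroup Y]
    (f : (Fin n → Bool) → Y) : ℝ :=
  ⨆ ε : Fin n → Bool, ‖f ε‖

/-- The `L_p` norm for `p ∈ [1,∞]` encoded as `p : ℝ≥0∞`. -/
def lpNormE {n : ℕ} {Y : Type*} [NormedAddCommGroup Y] (p : ℝ≥0∞)
    (f : (Fin n → Bool) → Y) : ℝ :=
  if p = ⊤ then linfNorm f else lpNorm p.toReal f

/-- The scalar `L_p` norm of the gradient `‖(∑_i |∂_i f|²)^{1/2}‖_{L_p}`. -/
def gradLpNorm {n : ℕ} (p : ℝ) (f : (Fin n → Bool) → ℂ) : ℝ :=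
  lpNorm p (fun ε => Real.sqrt (∑ i : Fin n, ‖pderiv i f ε‖ ^ 2))

/-- The Rademacher projection `Rad f(ε) = ∑_i f̂({i}) ε_i`. -/
def Rad {n : ℕ} (f : (Fin n → Bool) → X) : (Fin n → Bool) → X :=
  fun ε => ∑ i : Fin n, sgn (ε i) • coeff f {i}

/-- A complex Banach space is `K`-convex if the Rademacher projections are uniformly
bounded on `L_q` for some `q ∈ (1,∞)`. -/
def KConvex (X : Type*) [NormedAddCommGroup X] [NormedSpace ℂ X] : Prop :=
  ∃ q : ℝ, 1 < q ∧ ∃ M : ℝ, ∀ (n : ℕ) (f : (Fin n → Bool) → X),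
    lpNorm q (Rad f) ≤ M * lpNorm q f

/-- `X` has cotype `q` with constant `C`. -/
def HasCotype (X : Type*) [NormedAddCommGroup X] [NormedSpace ℂ X] (q C : ℝ) : Prop :=
  ∀ (n : ℕ) (x : Fin n → X),
    C⁻¹ * (∑ i : Fin n, ‖x i‖ ^ q) ^ (1 / q) ≤
      ((2 ^ n : ℝ)⁻¹ * ∑ ε : Fin n → Bool, ‖∑ i : Fin n, sgn (ε i) • x i‖ ^ q) ^ (1 / q)

/-- The entropy `Ent(h)` of a nonnegative function on the cube. -/
def entropy {n : ℕ} (h : (Fin n → Bool) → ℝ) : ℝ :=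
  (2 ^ n : ℝ)⁻¹ * ∑ ε : Fin n → Bool, h ε * Real.log (h ε) -
    ((2 ^ n : ℝ)⁻¹ * ∑ ε : Fin n → Bool, h ε) *
      Real.log ((2 ^ n : ℝ)⁻¹ * ∑ ε : Fin n → Bool, h ε)

/-- The `L_∞` norm of the gradient `max_ε (∑_i |∂_i f(ε)|²)^{1/2}`. -/
def gradLinfNorm {n : ℕ} (f : (Fin n → Bool) → ℂ) : ℝ :=
  ⨆ ε : Fin n → Bool, Real.sqrt (∑ i : Fin n, ‖pderiv i f ε‖ ^ 2)


/-! ### Averages over signs -/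

section Averages

set_option linter.unusedSectionVars false

variable {ι κ μ : Type*} [Fintype ι] [DecidableEq ι] [Fintype κ] [DecidableEq κ]
  [Fintype μ] [DecidableEq μ]

lemma sgn_beq (a b : Bool) : sgn (a == b) = sgn a * sgn b := by
  cases a <;> cases b <;> simp [sgn]

lemma sgn_mul_self (a : Bool) : sgn a * sgn a = 1 := by
  cases a <;> simp [sgn]

/-- Average over all sign choices. -/
def avg (G : (ι → Bool) → ℝ) : ℝ := (2 ^ Fintype.card ι : ℝ)⁻¹ * ∑ ε, G ε

lemma avg_mono {F G : (ι → Bool) → ℝ} (h : ∀ ε, F ε ≤ G ε) : avg F ≤ avg G := by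
  unfold avg
  gcongr with ε
  exact h ε

lemma avg_const (c : ℝ) : avg (fun _ : ι → Bool => c) = c := by
  simp [avg]

lemma avg_add (F G : (ι → Bool) → ℝ) : avg (fun ε => F ε + G ε) = avg F + avg G := by
  simp [avg, Finset.sum_add_distrib, mul_add]

lemma avg_smul (c : ℝ) (F : (ι → Bool) → ℝ) : avg (fun ε => c * F ε) = c * avg F := by
  simp only [avg, ← Finset.mul_sum]; ring

lemma avg_sum (F : κ → (ι → Bool) → ℝ) :
    avg (fun ε => ∑ k, F k ε) = ∑ k, avg (F k) := by
  simp only [avg, ← Finset.mul_sum]; rw [Finset.sum_comm]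

lemma avg_comm (F : (ι → Bool) → (κ → Bool) → ℝ) :
    avg (fun ε => avg (fun θ => F ε θ)) = avg (fun θ => avg (fun ε => F ε θ)) := by
  simp only [avg, ← Finset.mul_sum]; rw [Finset.sum_comm]; ring

lemma avg_nonneg {F : (ι → Bool) → ℝ} (h : ∀ ε, 0 ≤ F ε) : 0 ≤ avg F := by
  have := avg_mono (F := fun _ => 0) h
  rwa [avg_const] at this

lemma le_avg_of_nonneg {F : (ι → Bool) → ℝ} (h : ∀ ε, 0 ≤ F ε) (ε : ι → Bool) :
    F ε ≤ 2 ^ Fintype.card ι * avg F := by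
  unfold avg
  rw [← mul_assoc, mul_inv_cancel₀ (by positivity), one_mul]
  exact Finset.single_le_sum (f := F) (fun i _ => h i) (Finset.mem_univ ε)

lemma exists_le_avg (F : (ι → Bool) → ℝ) : ∃ ε, F ε ≤ avg F := by
  by_contra! h
  have h2 : ∑ ε : ι → Bool, avg F < ∑ ε, F ε :=
    Finset.sum_lt_sum_of_nonempty Finset.univ_nonempty (fun i _ => h i)
  simp [avg] at h2

/-- Coordinatewise multiplication of signs, as a permutation of the cube. -/
def shift (θ : ι → Bool) : Equiv.Perm (ι → Bool) :=
  Function.Involutive.toPerm (fun ε i => (ε i == θ i)) (by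
    intro ε; funext i; show ((ε i == θ i) == θ i) = ε i; cases ε i <;> cases θ i <;> rfl)

@[simp] lemma shift_apply (θ ε : ι → Bool) (i : ι) : shift θ ε i = (ε i == θ i) := rfl

lemma shift_comm (θ ε : ι → Bool) : shift θ ε = shift ε θ := by
  funext i; simp only [shift_apply]; cases ε i <;> cases θ i <;> rfl

lemma avg_shift (θ : ι → Bool) (G : (ι → Bool) → ℝ) :
    avg (fun ε => G (shift θ ε)) = avg G := by
  unfold avg
  rw [Equiv.sum_comp (shift θ) G]

lemma avg_comp {e : κ → μ} (he : Function.Injective e) (F : (κ → Bool) → ℝ) :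
    avg (fun ε : μ → Bool => F (ε ∘ e)) = avg F := by
  have h1 : ∀ θ : κ → Bool, avg (fun ε : μ → Bool => F (shift θ (ε ∘ e)))
      = avg (fun ε : μ → Bool => F (ε ∘ e)) := by
    intro θ
    rw [← avg_shift (Function.extend e θ (fun _ => false)) (fun ε : μ → Bool => F (ε ∘ e))]
    congr 1
    funext ε
    congr 1
    funext k
    simp [he.extend_apply]
  rw [← avg_const (ι := κ) (avg fun ε : μ → Bool => F (ε ∘ e))]
  rw [← (funext h1 : (fun θ : κ → Bool => avg (fun ε : μ → Bool => F (shift θ (ε ∘ e)))) = _)]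
  rw [avg_comm]
  have h2 : ∀ ε : μ → Bool, avg (fun θ : κ → Bool => F (shift θ (ε ∘ e))) = avg F := by
    intro ε
    simp only [shift_comm _ (ε ∘ e)]
    exact avg_shift _ _
  simp only [h2, avg_const]

/-- The signed sum. -/
def S (x : ι → X) (ε : ι → Bool) : X := ∑ i, sgn (ε i) • x i

/-- The second moment of the signed sum. -/
def R (x : ι → X) : ℝ := avg (fun ε => ‖S x ε‖ ^ 2)

lemma R_nonneg (x : ι → X) : 0 ≤ R x := avg_nonneg (fun _ => by positivity)

lemma R_comp_le {e : κ → ι} (he : Function.Injective e) (x : ι → X) : R (x ∘ e) ≤ R x := by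
  classical
  set θ : ι → Bool := fun i => decide (i ∈ Set.range e) with hθ
  have key : ∀ ε : ι → Bool, (2 : ℝ) • S (x ∘ e) (ε ∘ e) = S x ε + S x (shift θ ε) := by
    intro ε
    unfold S
    rw [← Finset.sum_add_distrib, Finset.smul_sum]
    symm
    have hz : ∀ i, i ∉ Set.range e →
        sgn (ε i) • x i + sgn (shift θ ε i) • x i = 0 := by
      intro i hi
      rw [shift_apply, sgn_beq, ← add_smul]
      have hi2 : θ i = false := by simpa [hθ] using hi
      rw [hi2]
      simp [sgn]
    rw [← Finset.sum_subset (Finset.subset_univ (Finset.univ.image e))]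
    · rw [Finset.sum_image (fun a _ b _ h => he h)]
      refine Finset.sum_congr rfl fun k _ => ?_
      rw [shift_apply, sgn_beq, ← add_smul, smul_smul]
      congr 1
      simp [hθ, sgn]
      split_ifs <;> norm_num
    · intro i _ hi
      apply hz
      simpa using hi
  have h1 : ∀ ε : ι → Bool, ‖S (x ∘ e) (ε ∘ e)‖ ^ 2
      ≤ (1 / 2) * (‖S x ε‖ ^ 2 + ‖S x (shift θ ε)‖ ^ 2) := by
    intro ε
    have h := norm_add_le (S x ε) (S x (shift θ ε))
    rw [← key, norm_smul] at h
    norm_num at h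
    have h0 := norm_nonneg (S (x ∘ e) (ε ∘ e))
    nlinarith [sq_nonneg (‖S x ε‖ - ‖S x (shift θ ε)‖)]
  calc R (x ∘ e) = avg (fun ε : ι → Bool => ‖S (x ∘ e) (ε ∘ e)‖ ^ 2) :=
        (avg_comp he (fun θ => ‖S (x ∘ e) θ‖ ^ 2)).symm
    _ ≤ _ := avg_mono h1
    _ = R x := by
      rw [avg_smul, avg_add, avg_shift θ (fun ε => ‖S x ε‖ ^ 2)]
      unfold R; ring

lemma norm_sq_le_R (x : ι → X) (i : ι) : ‖x i‖ ^ 2 ≤ R x := by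
  have h := R_comp_le (e := fun _ : Unit => i) (fun _ _ _ => rfl) x
  refine le_trans (le_of_eq ?_) h
  unfold R
  rw [← avg_const (ι := Unit) (‖x i‖ ^ 2)]
  congr 1
  funext ε
  have : |sgn (ε ())| = 1 := by cases ε () <;> simp [sgn]
  simp [S, norm_smul, this]

/-- Averaged cotype-like inequality on a fixed index set. -/
def Q (X : Type*) [NormedAddCommGroup X] [NormedSpace ℂ X] (ι : Type*) [Fintype ι]
    [DecidableEq ι] (c : ℝ) : Prop :=
  ∀ x : ι → X, ∑ i, ‖x i‖ ^ 2 ≤ c * Fintype.card ι * R x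

lemma Q_equiv (e : ι ≃ κ) {c : ℝ} (hc : 0 ≤ c) (h : Q X ι c) : Q X κ c := by
  intro x
  have h1 := h (x ∘ e)
  rw [← Fintype.card_congr e]
  calc ∑ i, ‖x i‖ ^ 2 = ∑ i, ‖(x ∘ e) i‖ ^ 2 := (Equiv.sum_comp e (fun i => ‖x i‖ ^ 2)).symm
    _ ≤ _ := h1
    _ ≤ _ := by gcongr; exact R_comp_le e.injective x

lemma Q_mul {a b : ℝ} (hb : 0 ≤ b) (h1 : Q X ι a) (h2 : Q X κ b) :
    Q X (ι × κ) (a * b) := by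
  intro x
  -- rows
  set y : (ι × κ → Bool) → ι → X := fun ε i => S (fun j => x (i, j)) (fun j => ε (i, j)) with hy
  have hS : ∀ (ε : ι × κ → Bool) (η : ι → Bool), S (y ε) η = S x (shift (fun p => η p.1) ε) := by
    intro ε η
    simp only [S, hy, shift_apply, sgn_beq, Fintype.sum_prod_type, Finset.smul_sum, smul_smul]
    refine Finset.sum_congr rfl fun i _ => Finset.sum_congr rfl fun j _ => ?_
    rw [mul_comm]
  have hrow : ∀ i, R (fun j => x (i, j)) = avg (fun ε => ‖y ε i‖ ^ 2) := by
    intro i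
    exact (avg_comp (e := fun j : κ => (i, j)) (fun _ _ h => (Prod.mk.inj h).2)
      (fun θ => ‖S (fun j => x (i, j)) θ‖ ^ 2)).symm
  have hR : avg (fun ε => R (y ε)) = R x := by
    unfold R
    rw [avg_comm]
    simp only [hS]
    have : ∀ η : ι → Bool, avg (fun ε => ‖S x (shift (fun p : ι × κ => η p.1) ε)‖ ^ 2) =
        avg (fun ε => ‖S x ε‖ ^ 2) := fun η => avg_shift _ (fun ε => ‖S x ε‖ ^ 2)
    simp only [this, avg_const]
  calc ∑ p, ‖x p‖ ^ 2 = ∑ i, ∑ j, ‖x (i, j)‖ ^ 2 := Fintype.sum_prod_type _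
    _ ≤ ∑ i, b * Fintype.card κ * R (fun j => x (i, j)) :=
        Finset.sum_le_sum fun i _ => h2 (fun j => x (i, j))
    _ = b * Fintype.card κ * avg (fun ε => ∑ i, ‖y ε i‖ ^ 2) := by
        rw [avg_sum, Finset.mul_sum]; simp only [hrow]
    _ ≤ b * Fintype.card κ * avg (fun ε => a * Fintype.card ι * R (y ε)) := by
        gcongr
        exact avg_mono fun ε => h1 (y ε)
    _ = _ := by
        rw [avg_smul, hR, Fintype.card_prod]; push_cast; ring

lemma Q_pow {N : ℕ} {c : ℝ} (hc : 0 ≤ c) (h : Q X (Fin N) c) (k : ℕ) :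
    Q X (Fin (N ^ k)) (c ^ k) := by
  induction k with
  | zero =>
    intro x
    have := norm_sq_le_R x ⟨0, by simp⟩
    have hu : ∑ i : Fin (N ^ 0), ‖x i‖ ^ 2 = ‖x ⟨0, by simp⟩‖ ^ 2 := by
      apply Fintype.sum_eq_single
      intro j hj
      exact absurd (Fin.ext (by have := j.2; simp at this; simp [this])) hj
    rw [hu]
    simpa using this
  | succ k ih =>
    have := Q_equiv finProdFinEquiv (by positivity) (Q_mul hc ih h)
    rw [pow_succ c]
    exact this

lemma card_lt_of_Q {N : ℕ} {c : ℝ} (hN : 2 ≤ N) (hc : 0 < c) (h : Q X (Fin N) c) (k : ℕ)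
    (x : ι → X) :
    (Finset.univ.filter (fun i => c ^ k * R x < ‖x i‖ ^ 2)).card < N ^ k := by
  by_contra! hle
  obtain ⟨t, ht, htc⟩ := Finset.exists_subset_card_eq hle
  let e : Fin (N ^ k) → ι := fun j => (t.equivFinOfCardEq htc).symm j
  have he : Function.Injective e :=
    Subtype.val_injective.comp (t.equivFinOfCardEq htc).symm.injective
  have h1 := Q_pow hc.le h k (x ∘ e)
  have h2 : ∑ i : Fin (N ^ k), c ^ k * R x < ∑ i, ‖(x ∘ e) i‖ ^ 2 := by
    apply Finset.sum_lt_sum_of_nonempty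
    · have : NeZero (N ^ k) := ⟨by positivity⟩
      exact Finset.univ_nonempty
    · intro j _
      have := ht ((t.equivFinOfCardEq htc).symm j).2
      exact (Finset.mem_filter.mp this).2
  have h3 := R_comp_le he x
  simp at h1 h2
  have : c ^ k * (N : ℝ) ^ k * R (x ∘ e) ≤ c ^ k * (N : ℝ) ^ k * R x := by gcongr
  simp only [Function.comp_def] at *
  nlinarith

lemma layer {u M c : ℝ} (hu : 0 ≤ u) (huM : u ≤ M) (hc : 0 < c) (r K : ℕ) :
    u ^ r ≤ (∑ k ∈ Finset.range K, if c ^ (k + 1) * M < u then (c ^ r) ^ k * M ^ r else 0)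
      + (if u ≤ c ^ K * M then (c ^ r) ^ K * M ^ r else 0) := by
  have hM : 0 ≤ M := hu.trans huM
  induction K with
  | zero =>
    simp [huM]; gcongr
  | succ K ih =>
    have hsum : 0 ≤ ∑ k ∈ Finset.range (K + 1),
        if c ^ (k + 1) * M < u then (c ^ r) ^ k * M ^ r else 0 :=
      Finset.sum_nonneg fun k _ => by split_ifs <;> positivity
    by_cases h : u ≤ c ^ (K + 1) * M
    · rw [if_pos h]
      have : u ^ r ≤ (c ^ (K + 1) * M) ^ r := by gcongr
      rw [mul_pow, ← pow_mul, mul_comm (K + 1) r, pow_mul] at this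
      linarith
    · rw [if_neg h, Finset.sum_range_succ, if_pos (not_le.mp h)]
      have : (if u ≤ c ^ K * M then (c ^ r) ^ K * M ^ r else 0) ≤ (c ^ r) ^ K * M ^ r := by
        split_ifs
        · exact le_rfl
        · positivity
      linarith

lemma sum_pow_le {N : ℕ} {c : ℝ} (hN : 2 ≤ N) (hc : 0 < c) (h : Q X (Fin N) c) (r : ℕ)
    (hr : N * c ^ r ≤ 1 / 2) (n : ℕ) (x : Fin n → X) :
    ∑ i, (‖x i‖ ^ 2) ^ r ≤ (1 + 2 * N) * R x ^ r := by
  have hM := R_nonneg x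
  have hN1 : (1 : ℝ) ≤ N := by exact_mod_cast (by omega : 1 ≤ N)
  have hcr : c ^ r ≤ 1 / 2 := by
    have : 0 < c ^ r := by positivity
    nlinarith
  have hstep : ∀ i, (‖x i‖ ^ 2) ^ r ≤
      (∑ k ∈ Finset.range n, if c ^ (k + 1) * R x < ‖x i‖ ^ 2 then (c ^ r) ^ k * R x ^ r else 0)
        + (c ^ r) ^ n * R x ^ r := by
    intro i
    refine (layer (by positivity) (norm_sq_le_R x i) hc r n).trans ?_
    gcongr
    split_ifs
    · exact le_rfl
    · positivity
  refine (Finset.sum_le_sum fun i _ => hstep i).trans ?_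
  rw [Finset.sum_add_distrib, Finset.sum_comm]
  have h1 : ∑ i : Fin n, (c ^ r) ^ n * R x ^ r ≤ R x ^ r := by
    simp only [Finset.sum_const, Finset.card_univ, Fintype.card_fin, nsmul_eq_mul]
    have h2 : (c ^ r) ^ n ≤ (1 / 2) ^ n := by gcongr
    have h3 : (n : ℝ) * (1 / 2) ^ n ≤ 1 := by
      have : (n : ℝ) ≤ 2 ^ n := by exact_mod_cast Nat.lt_two_pow_self.le
      rw [one_div, inv_pow, ← div_eq_mul_inv, div_le_one (by positivity)]
      exact this
    calc (n : ℝ) * ((c ^ r) ^ n * R x ^ r) ≤ n * ((1 / 2) ^ n * R x ^ r) := by gcongr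
      _ = n * (1 / 2) ^ n * R x ^ r := by ring
      _ ≤ 1 * R x ^ r := by gcongr
      _ = _ := one_mul _
  have h2 : ∀ k, (∑ i : Fin n, if c ^ (k + 1) * R x < ‖x i‖ ^ 2
      then (c ^ r) ^ k * R x ^ r else 0) ≤ (1 / 2) ^ k * (N * R x ^ r) := by
    intro k
    rw [← Finset.sum_filter, Finset.sum_const, nsmul_eq_mul]
    have h3 := (card_lt_of_Q hN hc h (k + 1) x).le
    have h4 : ((Finset.univ.filter (fun i => c ^ (k + 1) * R x < ‖x i‖ ^ 2)).card : ℝ)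
        ≤ (N : ℝ) ^ (k + 1) := by exact_mod_cast h3
    calc _ ≤ (N : ℝ) ^ (k + 1) * ((c ^ r) ^ k * R x ^ r) := by gcongr
      _ = (N * c ^ r) ^ k * (N * R x ^ r) := by rw [mul_pow]; ring
      _ ≤ _ := by gcongr
  have h3 : ∑ k ∈ Finset.range n, (1 / 2 : ℝ) ^ k ≤ 2 := by
    have := geom_sum_eq (x := (1 / 2 : ℝ)) (by norm_num) n
    rw [this]
    have : (0 : ℝ) < (1 / 2) ^ n := by positivity
    rw [div_le_iff_of_neg (by norm_num)]
    linarith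
  have h4 := Finset.sum_le_sum fun k (_ : k ∈ Finset.range n) => h2 k
  rw [← Finset.sum_mul] at h4
  have h5 : (∑ k ∈ Finset.range n, (1 / 2 : ℝ) ^ k) * (N * R x ^ r) ≤ 2 * (N * R x ^ r) := by
    gcongr
  linarith

lemma R_pow_le (r : ℕ) (x : ι → X) : R x ^ r ≤ avg (fun ε => (‖S x ε‖ ^ 2) ^ r) := by
  have h := Real.pow_arith_mean_le_arith_mean_pow Finset.univ
    (fun _ : ι → Bool => (2 ^ Fintype.card ι : ℝ)⁻¹) (fun ε => ‖S x ε‖ ^ 2)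
    (fun _ _ => by positivity) (by simp) (fun _ _ => by positivity) r
  simpa only [← Finset.mul_sum, R, avg] using h

lemma cotype_of_Q {N : ℕ} {c : ℝ} (hN : 2 ≤ N) (hc : 0 < c) (hc1 : c < 1)
    (h : Q X (Fin N) c) : ∃ q : ℝ, 2 ≤ q ∧ ∃ C : ℝ, 0 < C ∧ HasCotype X q C := by
  obtain ⟨r, hr⟩ : ∃ r : ℕ, N * c ^ r ≤ 1 / 2 := by
    obtain ⟨r, hr⟩ := exists_pow_lt_of_lt_one (show (0 : ℝ) < 1 / (2 * N) by positivity) hc1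
    refine ⟨r, ?_⟩
    rw [lt_div_iff₀ (by positivity)] at hr
    linarith
  have hr1 : 1 ≤ r := by
    by_contra! h0
    have : r = 0 := by omega
    subst this
    have : (2 : ℝ) ≤ N := by exact_mod_cast hN
    simp at hr
    linarith
  have hr1' : (1 : ℝ) ≤ r := by exact_mod_cast hr1
  set q : ℝ := 2 * r with hq
  have hpow : ∀ a : ℝ, 0 ≤ a → a ^ q = (a ^ 2) ^ r := by
    intro a ha
    rw [← pow_mul, ← Real.rpow_natCast]
    push_cast
    rfl
  refine ⟨q, by linarith, (1 + 2 * N : ℝ) ^ (1 / q), by positivity, ?_⟩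
  intro n x
  have h1 := sum_pow_le hN hc h r hr n x
  have h2 := R_pow_le r x
  have h3 : ∑ i, ‖x i‖ ^ q ≤ (1 + 2 * N) * ((2 ^ n : ℝ)⁻¹ *
      ∑ ε : Fin n → Bool, ‖∑ i : Fin n, sgn (ε i) • x i‖ ^ q) := by
    simp only [hpow _ (norm_nonneg _)]
    refine h1.trans ?_
    gcongr
    simpa [avg, S] using h2
  rw [inv_mul_le_iff₀ (by positivity), ← Real.mul_rpow (by positivity) (by positivity)]
  exact Real.rpow_le_rpow (by positivity) h3 (by positivity)


/-! ### Almost isometric copies of finite-dimensional sup-norm spaces -/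

lemma exists_almost_linf [Nonempty ι] (hQ : ∀ c : ℝ, 0 < c → c < 1 → ¬ Q X ι c) (δ : ℝ)
    (hδ0 : 0 < δ) (hδ1 : δ ≤ 1) :
    ∃ x : ι → X, (∀ ε, ‖S x ε‖ ≤ 1 + δ) ∧ ∀ i, 1 - δ ≤ ‖x i‖ := by
  set N : ℕ := Fintype.card ι with hN
  have hN1 : (1 : ℝ) ≤ N := by exact_mod_cast Fintype.card_pos
  set s : ℝ := δ / N with hs
  have hs0 : 0 < s := by positivity
  have hsδ : s ≤ δ := div_le_self hδ0.le hN1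
  set t : ℝ := s ^ 2 / (4 * 2 ^ N) with ht
  have ht0 : 0 < t := by positivity
  have ht2 : 4 * (2 ^ N * t) = s ^ 2 := by rw [ht]; field_simp
  have h2N : (1 : ℝ) ≤ 2 ^ N := one_le_pow₀ (by norm_num)
  have htδ : t ≤ δ / 4 := by nlinarith
  have hc0 : 0 < 1 - t / N := by
    have : t / N ≤ t := div_le_self ht0.le hN1
    linarith
  have hc1 : 1 - t / N < 1 := by
    have : 0 < t / N := by positivity
    linarith
  have hx := hQ _ hc0 hc1
  unfold Q at hx
  push Not at hx
  obtain ⟨z, hz⟩ := hx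
  rw [← hN] at hz
  have hcN : (1 - t / N) * N = N - t := by field_simp
  rw [hcN] at hz
  have hRz : 0 < R z := by
    rcases (R_nonneg z).lt_or_eq with h | h
    · exact h
    · exfalso
      rw [← h, mul_zero] at hz
      have : ∑ i, ‖z i‖ ^ 2 ≤ 0 := Finset.sum_nonpos fun i _ => by
        have := norm_sq_le_R z i
        linarith
      linarith
  set ρ : ℝ := Real.sqrt (R z) with hρ
  have hρ0 : 0 < ρ := Real.sqrt_pos.mpr hRz
  have hρ2 : ρ ^ 2 = R z := Real.sq_sqrt hRz.le
  set x : ι → X := fun i => ρ⁻¹ • z i with hxdef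
  have hSx : ∀ ε, S x ε = ρ⁻¹ • S z ε := by
    intro ε
    simp only [S, hxdef, Finset.smul_sum]
    exact Finset.sum_congr rfl fun i _ => smul_comm _ _ _
  have hR : R x = 1 := by
    unfold R
    simp only [hSx, norm_smul, mul_pow]
    rw [avg_smul]
    change _ * R z = 1
    rw [← hρ2, norm_inv, Real.norm_of_nonneg hρ0.le]
    field_simp
  have hsum : N - t < ∑ i, ‖x i‖ ^ 2 := by
    simp only [hxdef, norm_smul, mul_pow, ← Finset.mul_sum]
    rw [norm_inv, Real.norm_of_nonneg hρ0.le, inv_pow, hρ2, ← div_eq_inv_mul,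
      lt_div_iff₀ hRz]
    exact hz
  have hle1 : ∀ i, ‖x i‖ ^ 2 ≤ 1 := fun i => hR ▸ norm_sq_le_R x i
  have hge : ∀ i, 1 - t ≤ ‖x i‖ ^ 2 := by
    intro i
    have h1 : 1 - ‖x i‖ ^ 2 ≤ ∑ j, (1 - ‖x j‖ ^ 2) :=
      Finset.single_le_sum (f := fun j => 1 - ‖x j‖ ^ 2)
        (fun j _ => by have := hle1 j; linarith) (Finset.mem_univ i)
    rw [Finset.sum_sub_distrib] at h1
    simp only [Finset.sum_const, Finset.card_univ, nsmul_eq_mul, mul_one, ← hN] at h1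
    linarith
  -- flipping one coordinate
  have hflip : ∀ (j : ι) (ε : ι → Bool),
      ‖S x (shift (Function.update (fun _ => true) j false) ε)‖ ≤ ‖S x ε‖ + s := by
    intro j
    set θ : ι → Bool := Function.update (fun _ => true) j false with hθ
    have hdiff : ∀ ε, S x ε - S x (shift θ ε) = (2 * sgn (ε j)) • x j := by
      intro ε
      simp only [S, ← Finset.sum_sub_distrib, shift_apply, sgn_beq, ← sub_smul]
      rw [Fintype.sum_eq_single j]
      · congr 1
        simp only [hθ, Function.update_self]
        cases ε j <;> norm_num [sgn]
      · intro i hi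
        simp [hθ, hi, sgn]
    have h1 : ∀ ε, 2 * ‖x j‖ ≤ ‖S x ε‖ + ‖S x (shift θ ε)‖ := by
      intro ε
      have := norm_sub_le (S x ε) (S x (shift θ ε))
      rw [hdiff, norm_smul] at this
      have h2 : ‖2 * sgn (ε j)‖ = 2 := by cases ε j <;> simp [sgn]
      rwa [h2] at this
    have h2 : ∀ ε, 4 * (1 - t) ≤ (‖S x ε‖ + ‖S x (shift θ ε)‖) ^ 2 := by
      intro ε
      have := h1 ε
      have := hge j
      have := norm_nonneg (x j)
      nlinarith
    set h : (ι → Bool) → ℝ := fun ε => ‖S x ε‖ ^ 2 + ‖S x (shift θ ε)‖ ^ 2 + (-(2 * (1 - t)))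
      with hh
    have h3 : ∀ ε, 0 ≤ h ε := by
      intro ε
      have := h2 ε
      simp only [hh]
      nlinarith [sq_nonneg (‖S x ε‖ - ‖S x (shift θ ε)‖)]
    have h4 : avg h = 2 * t := by
      simp only [hh]
      rw [avg_add, avg_add, avg_const, avg_shift θ (fun ε => ‖S x ε‖ ^ 2)]
      change R x + R x + _ = _
      rw [hR]; ring
    intro ε
    have h5 := le_avg_of_nonneg h3 ε
    rw [h4, ← hN] at h5
    have h6 : (‖S x (shift θ ε)‖ - ‖S x ε‖) ^ 2 ≤ s ^ 2 := by
      have := h2 ε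
      simp only [hh] at h5
      nlinarith
    have := abs_le_of_sq_le_sq h6 hs0.le
    linarith [(abs_le.mp this).2]
  have hupd : ∀ (j : ι) (b : Bool) (ε : ι → Bool),
      ‖S x (Function.update ε j b)‖ ≤ ‖S x ε‖ + s := by
    intro j b ε
    by_cases hb : b = ε j
    · rw [hb, Function.update_eq_self]; linarith
    · have : Function.update ε j b = shift (Function.update (fun _ => true) j false) ε := by
        funext i
        rw [shift_apply]
        by_cases hi : i = j
        · subst hi
          simp
          revert hb
          cases b <;> cases ε i <;> simp
        · simp [hi]
      rw [this]
      exact hflip j ε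
  have hchain : ∀ (A : Finset ι) (ε ε' : ι → Bool),
      ‖S x (A.piecewise ε ε')‖ ≤ ‖S x ε'‖ + A.card * s := by
    intro A ε ε'
    induction A using Finset.induction_on with
    | empty => simp
    | insert j A hj ih =>
      rw [Finset.piecewise_insert, Finset.card_insert_of_notMem hj]
      have := hupd j (ε j) (A.piecewise ε ε')
      push_cast
      linarith
  obtain ⟨ε', hε'⟩ := exists_le_avg (fun ε => ‖S x ε‖ ^ 2)
  change _ ≤ R x at hε'
  rw [hR] at hε'
  have hε1 : ‖S x ε'‖ ≤ 1 := by
    have := norm_nonneg (S x ε')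
    nlinarith
  refine ⟨x, fun ε => ?_, fun i => ?_⟩
  · have := hchain Finset.univ ε ε'
    rw [Finset.piecewise_univ, Finset.card_univ, ← hN] at this
    have hNs : N * s = δ := by rw [hs]; field_simp
    linarith
  · have h1 := hge i
    have h2 := hle1 i
    have h3 := norm_nonneg (x i)
    have h4 : ‖x i‖ ≤ 1 := by nlinarith
    nlinarith

lemma norm_comb_le {x : ι → X} {K : ℝ} (hx : ∀ ε, ‖S x ε‖ ≤ K) (a : ι → ℝ) {m : ℝ}
    (ha : ∀ i, |a i| ≤ m) (hm : 0 ≤ m) : ‖∑ i, a i • x i‖ ≤ K * m := by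
  obtain ⟨g, hg1, hg2⟩ := exists_dual_vector'' ℝ (∑ i, a i • x i)
  have h1 : ‖∑ i, a i • x i‖ = ∑ i, a i * g (x i) := by
    have : g (∑ i, a i • x i) = ‖∑ i, a i • x i‖ := by simpa using hg2
    rw [← this, map_sum]
    simp
  set ε : ι → Bool := fun i => decide (0 ≤ g (x i)) with hε
  have h2 : ∀ i, sgn (ε i) * g (x i) = |g (x i)| := by
    intro i
    by_cases h : 0 ≤ g (x i)
    · simp [hε, h, sgn, abs_of_nonneg h]
    · simp [hε, h, sgn, abs_of_neg (not_le.mp h)]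
  have h3 : ∑ i, |g (x i)| ≤ K := by
    have : g (S x ε) = ∑ i, |g (x i)| := by
      simp [S, map_sum, h2]
    rw [← this]
    calc g (S x ε) ≤ ‖g (S x ε)‖ := le_abs_self _
      _ ≤ ‖g‖ * ‖S x ε‖ := g.le_opNorm _
      _ ≤ 1 * K := by
        gcongr
        exact hx ε
      _ = K := one_mul K
  rw [h1]
  calc ∑ i, a i * g (x i) ≤ ∑ i, m * |g (x i)| := by
        refine Finset.sum_le_sum fun i _ => (le_abs_self _).trans ?_
        rw [abs_mul]
        gcongr
        exact ha i
    _ = (∑ i, |g (x i)|) * m := by rw [← Finset.mul_sum, mul_comm]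
    _ ≤ K * m := by gcongr

lemma le_norm_comb {x : ι → X} {δ : ℝ} (hδ : δ ≤ 1 / 3) (hx : ∀ ε, ‖S x ε‖ ≤ 1 + δ)
    (hx' : ∀ i, 1 - δ ≤ ‖x i‖) (a : ι → ℝ) (i : ι) :
    (1 - 3 * δ) * |a i| ≤ ‖∑ i, a i • x i‖ := by
  obtain ⟨j, -, hj⟩ := Finset.exists_max_image Finset.univ (fun i => |a i|) ⟨i, Finset.mem_univ i⟩
  set b : ι → ℝ := fun k => if k = j then a k else - a k with hb
  have h1 : ∑ k, a k • x k + ∑ k, b k • x k = (2 * a j) • x j := by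
    rw [← Finset.sum_add_distrib, Fintype.sum_eq_single j]
    · simp [hb, ← add_smul, two_mul]
    · intro k hk
      simp [hb, hk]
  have h2 : ‖∑ k, b k • x k‖ ≤ (1 + δ) * |a j| := by
    apply norm_comb_le hx b _ (abs_nonneg _)
    intro k
    refine le_trans (le_of_eq ?_) (hj k (Finset.mem_univ k))
    simp only [hb]
    split_ifs <;> simp
  have h3 := norm_add_le (∑ k, a k • x k) (∑ k, b k • x k)
  rw [h1, norm_smul, norm_mul, Real.norm_eq_abs, Real.norm_eq_abs, abs_two] at h3
  have h4 := hx' j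
  have h5 := hj i (Finset.mem_univ i)
  have h6 := abs_nonneg (a j)
  have h7 : |a j| * (1 - δ) ≤ |a j| * ‖x j‖ := by gcongr
  have h8 : (1 - 3 * δ) * |a i| ≤ (1 - 3 * δ) * |a j| := by
    gcongr
    linarith
  linarith

end Averages

/-! ### Fourier analysis on the cube -/

lemma walsh_update {n : ℕ} (A : Finset (Fin n)) (ε : Fin n → Bool) (i : Fin n) :
    walsh A (Function.update ε i (!(ε i))) = (if i ∈ A then -1 else 1) * walsh A ε := by
  unfold walsh
  by_cases hi : i ∈ A
  · rw [if_pos hi, ← Finset.mul_prod_erase A _ hi, ← Finset.mul_prod_erase A _ hi, ← mul_assoc]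
    congr 1
    · rw [Function.update_self]; cases ε i <;> simp [sgn]
    · refine Finset.prod_congr rfl fun j hj => ?_
      rw [Function.update_of_ne (Finset.ne_of_mem_erase hj)]
  · rw [if_neg hi, one_mul]
    refine Finset.prod_congr rfl fun j hj => ?_
    rw [Function.update_of_ne (by rintro rfl; exact hi hj)]

lemma walsh_orth {n : ℕ} (ε δ : Fin n → Bool) :
    ∑ A : Finset (Fin n), walsh A ε * walsh A δ = if ε = δ then 2 ^ n else 0 := by
  have h : ∑ A : Finset (Fin n), walsh A ε * walsh A δ
      = ∏ i : Fin n, (1 + sgn (ε i) * sgn (δ i)) := by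
    rw [Finset.prod_one_add, Finset.powerset_univ]
    simp [walsh, Finset.prod_mul_distrib]
  rw [h]
  split_ifs with he
  · subst he
    simp only [sgn_mul_self]
    norm_num
  · obtain ⟨i, hi⟩ := Function.ne_iff.mp he
    apply Finset.prod_eq_zero (Finset.mem_univ i)
    revert hi
    cases ε i <;> cases δ i <;> simp [sgn]

lemma inversion {n : ℕ} (f : (Fin n → Bool) → X) (ε : Fin n → Bool) :
    f ε = ∑ A : Finset (Fin n), walsh A ε • coeff f A := by
  simp only [coeff, Finset.smul_sum, smul_smul]
  rw [Finset.sum_comm]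
  have h : ∀ δ : Fin n → Bool,
      ∑ A : Finset (Fin n), (walsh A ε * ((2 ^ n : ℝ)⁻¹ * walsh A δ)) • f δ
        = if ε = δ then f δ else 0 := by
    intro δ
    rw [← Finset.sum_smul]
    have : ∑ A : Finset (Fin n), walsh A ε * ((2 ^ n : ℝ)⁻¹ * walsh A δ)
        = (2 ^ n : ℝ)⁻¹ * ∑ A : Finset (Fin n), walsh A ε * walsh A δ := by
      rw [Finset.mul_sum]
      exact Finset.sum_congr rfl fun A _ => by ring
    rw [this, walsh_orth]
    split_ifs <;> simp
  simp only [h]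
  simp

lemma lap_eq {n : ℕ} (f : (Fin n → Bool) → X) (ε : Fin n → Bool) :
    lap f ε = ∑ i : Fin n, pderiv i f ε := by
  have h : ∀ i, pderiv i f ε
      = ∑ A : Finset (Fin n), (if i ∈ A then (1 : ℝ) else 0) • walsh A ε • coeff f A := by
    intro i
    unfold pderiv
    rw [inversion f ε, inversion f (Function.update ε i (!(ε i))), ← Finset.sum_sub_distrib,
      Finset.smul_sum]
    refine Finset.sum_congr rfl fun A _ => ?_
    rw [walsh_update, ← sub_smul, smul_smul, smul_smul]
    congr 1
    split_ifs <;> ring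
  simp only [h]
  rw [Finset.sum_comm]
  unfold lap
  refine Finset.sum_congr rfl fun A _ => ?_
  rw [← Finset.sum_smul]
  congr 1
  simp

/-- A scalar function on the cube has no Walsh coefficients above level `k`. -/
def low {n : ℕ} (F : (Fin n → Bool) → ℝ) (k : ℕ) : Prop :=
  ∀ A : Finset (Fin n), k < A.card → ∑ ε, walsh A ε * F ε = 0

lemma walsh_mul_sgn {n : ℕ} (A : Finset (Fin n)) (i : Fin n) (ε : Fin n → Bool) :
    walsh A ε * sgn (ε i) = walsh (if i ∈ A then A.erase i else insert i A) ε := by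
  unfold walsh
  split_ifs with hi
  · rw [← Finset.mul_prod_erase A _ hi, mul_comm, ← mul_assoc, sgn_mul_self, one_mul]
  · rw [Finset.prod_insert hi, mul_comm]

lemma low_lin {n : ℕ} {F : (Fin n → Bool) → ℝ} {k : ℕ} (h : low F k) (c : Fin n → ℝ) :
    low (fun ε => (∑ i, c i * sgn (ε i)) * F ε) (k + 1) := by
  intro A hA
  have : ∀ ε, walsh A ε * ((∑ i, c i * sgn (ε i)) * F ε)
      = ∑ i, c i * (walsh (if i ∈ A then A.erase i else insert i A) ε * F ε) := by
    intro ε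
    rw [Finset.sum_mul, Finset.mul_sum]
    refine Finset.sum_congr rfl fun i _ => ?_
    rw [← walsh_mul_sgn]; ring
  simp only [this]
  rw [Finset.sum_comm]
  refine Finset.sum_eq_zero fun i _ => ?_
  rw [← Finset.mul_sum, h, mul_zero]
  split_ifs with hi
  · rw [Finset.card_erase_of_mem hi]; omega
  · rw [Finset.card_insert_of_notMem hi]; omega

lemma low_one {n : ℕ} : low (fun _ : Fin n → Bool => (1 : ℝ)) 0 := by
  intro A hA
  obtain ⟨i, hi⟩ := Finset.card_pos.mp hA
  simp only [mul_one]
  have hinv : Function.Involutive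
      (fun ε : Fin n → Bool => Function.update ε i (!(ε i))) := by
    intro ε; simp
  have h := Equiv.sum_comp (Function.Involutive.toPerm _ hinv) (fun ε => walsh A ε)
  have h2 : ∀ ε : Fin n → Bool, walsh A ((Function.Involutive.toPerm _ hinv) ε) = - walsh A ε := by
    intro ε
    change walsh A (Function.update ε i (!(ε i))) = _
    rw [walsh_update, if_pos hi]; ring
  simp only [h2, Finset.sum_neg_distrib] at h
  linarith

lemma low_pow {n : ℕ} (c : Fin n → ℝ) (k : ℕ) :
    low (fun ε => (∑ i, c i * sgn (ε i)) ^ k) k := by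
  induction k with
  | zero => simpa using low_one
  | succ k ih =>
    have := low_lin ih c
    simpa only [pow_succ'] using this

lemma low_eval {n : ℕ} (c : Fin n → ℝ) (P : Polynomial ℝ) (d : ℕ) (hP : P.natDegree ≤ d) :
    low (fun ε => P.eval (∑ i, c i * sgn (ε i))) d := by
  intro A hA
  simp only [Polynomial.eval_eq_sum_range, Finset.mul_sum]
  rw [Finset.sum_comm]
  refine Finset.sum_eq_zero fun k hk => ?_
  have h := low_pow c k A (by have := Finset.mem_range.mp hk; omega)
  calc _ = P.coeff k * ∑ ε : Fin n → Bool, walsh A ε * (∑ i, c i * sgn (ε i)) ^ k := by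
        rw [Finset.mul_sum]
        exact Finset.sum_congr rfl fun ε _ => by ring
    _ = 0 := by rw [h, mul_zero]

lemma lpNormE_le {n : ℕ} {p : ℝ≥0∞} (hp : 1 ≤ p) (f : (Fin n → Bool) → X) {K : ℝ}
    (h : ∀ ε, ‖f ε‖ ≤ K) : lpNormE p f ≤ K := by
  have hK : 0 ≤ K := (norm_nonneg _).trans (h fun _ => true)
  unfold lpNormE
  split_ifs with hp'
  · exact ciSup_le h
  · have hp0 : 0 < p.toReal := ENNReal.toReal_pos (by positivity) hp'
    unfold lpNorm
    have h1 : (2 ^ n : ℝ)⁻¹ * ∑ ε : Fin n → Bool, ‖f ε‖ ^ p.toReal ≤ K ^ p.toReal := by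
      have : ∑ ε : Fin n → Bool, ‖f ε‖ ^ p.toReal ≤ ∑ ε : Fin n → Bool, K ^ p.toReal :=
        Finset.sum_le_sum fun ε _ => Real.rpow_le_rpow (norm_nonneg _) (h ε) hp0.le
      rw [inv_mul_le_iff₀ (by positivity)]
      simpa using this
    calc _ ≤ (K ^ p.toReal) ^ (1 / p.toReal) :=
          Real.rpow_le_rpow (by positivity) h1 (by positivity)
      _ = K := by rw [one_div, Real.rpow_rpow_inv hK hp0.ne']

lemma le_lpNormE {n : ℕ} {p : ℝ≥0∞} (hp : 1 ≤ p) (f : (Fin n → Bool) → X) {K : ℝ}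
    (hK : 0 ≤ K) (h : ∀ ε, K ≤ ‖f ε‖) : K ≤ lpNormE p f := by
  unfold lpNormE
  split_ifs with hp'
  · exact (h fun _ => true).trans (le_ciSup (f := fun ε => ‖f ε‖) (Set.finite_range _).bddAbove _)
  · have hp0 : 0 < p.toReal := ENNReal.toReal_pos (by positivity) hp'
    unfold lpNorm
    have h1 : K ^ p.toReal ≤ (2 ^ n : ℝ)⁻¹ * ∑ ε : Fin n → Bool, ‖f ε‖ ^ p.toReal := by
      have : ∑ ε : Fin n → Bool, K ^ p.toReal ≤ ∑ ε : Fin n → Bool, ‖f ε‖ ^ p.toReal :=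
        Finset.sum_le_sum fun ε _ => Real.rpow_le_rpow hK (h ε) hp0.le
      rw [le_inv_mul_iff₀ (by positivity)]
      simpa using this
    calc K = (K ^ p.toReal) ^ (1 / p.toReal) := by rw [one_div, Real.rpow_rpow_inv hK hp0.ne']
      _ ≤ _ := Real.rpow_le_rpow (by positivity) h1 (by positivity)

/-- The discrete derivative of the Chebyshev polynomial at `1` is close to `d ^ 2`. -/
lemma exists_cheb (d : ℕ) (b : ℝ) (hb : b < (d : ℝ) ^ 2) :
    ∃ n : ℕ, 1 ≤ n ∧ d ≤ n ∧ b < (n : ℝ) / 2 * ((Polynomial.Chebyshev.T ℝ d).eval 1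
      - (Polynomial.Chebyshev.T ℝ d).eval (1 - 2 / (n : ℝ))) := by
  set P := Polynomial.Chebyshev.T ℝ d with hP
  have hder : HasDerivAt (fun x => P.eval x) ((d : ℝ) ^ 2) 1 := by
    have := P.hasDerivAt 1
    have h2 : (Polynomial.derivative P).eval 1 = (d : ℝ) ^ 2 := by
      rw [hP, Polynomial.Chebyshev.derivative_T_eval_one]; simp
    rwa [h2] at this
  rw [hasDerivAt_iff_tendsto_slope] at hder
  have hlim : Filter.Tendsto (fun n : ℕ => 1 - 2 / (n : ℝ)) Filter.atTop
      (nhdsWithin 1 {1}ᶜ) := by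
    rw [tendsto_nhdsWithin_iff]
    constructor
    · have := tendsto_const_div_atTop_nhds_zero_nat (2 : ℝ)
      simpa using this.const_sub 1
    · filter_upwards [Filter.eventually_ge_atTop 1] with n hn
      have : (0 : ℝ) < 2 / n := by positivity
      simp
      omega
  have h := (hder.comp hlim).eventually (lt_mem_nhds hb)
  obtain ⟨n, h1, h2, h3⟩ := (h.and ((Filter.eventually_ge_atTop 1).and
    (Filter.eventually_ge_atTop d))).exists
  refine ⟨n, h2, h3, lt_of_lt_of_eq h1 ?_⟩
  have hn : (n : ℝ) ≠ 0 := by positivity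
  simp only [Function.comp_apply, slope_def_field]
  field_simp
  ring

lemma cheb_contra (p : ℝ≥0∞) (hp : 1 ≤ p) (η : ℝ) (hη0 : 0 < η) (hη1 : η < 1) (d : ℕ)
    (hd : 1 ≤ d)
    (H : ∀ n : ℕ, d ≤ n → ∀ f : (Fin n → Bool) → X, degLE f d →
      lpNormE p (lap f) ≤ (1 - η) * (d : ℝ) ^ 2 * lpNormE p f) :
    ∃ n : ℕ, 1 ≤ n ∧ ∃ c : ℝ, 0 < c ∧ c < 1 ∧ Q X (Fin n → Bool) c := by
  have hd2 : (1 : ℝ) ≤ (d : ℝ) ^ 2 := one_le_pow₀ (by exact_mod_cast hd)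
  obtain ⟨n, hn1, hdn, hn⟩ := exists_cheb d ((1 - η / 2) * (d : ℝ) ^ 2) (by nlinarith)
  refine ⟨n, hn1, ?_⟩
  by_contra! hQ
  set δ₀ : ℝ := η / 16 with hδ₀
  obtain ⟨x, hx1, hx2⟩ := exists_almost_linf (X := X) (ι := Fin n → Bool) hQ δ₀
    (by positivity) (by linarith)
  have hn0 : (0 : ℝ) < n := by exact_mod_cast hn1
  set P := Polynomial.Chebyshev.T ℝ d with hP
  set g : (Fin n → Bool) → (Fin n → Bool) → ℝ :=
    fun ε δ => P.eval (∑ i, (sgn (δ i) / n) * sgn (ε i)) with hg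
  set f : (Fin n → Bool) → X := fun ε => ∑ δ, g ε δ • x δ with hf
  have hg1 : ∀ ε δ, |g ε δ| ≤ 1 := by
    intro ε δ
    apply Polynomial.Chebyshev.abs_eval_T_real_le_one
    refine (Finset.abs_sum_le_sum_abs _ _).trans ?_
    have : ∀ i, |sgn (δ i) / n * sgn (ε i)| = (n : ℝ)⁻¹ := by
      intro i
      have h1 : |sgn (δ i)| = 1 := by cases δ i <;> simp [sgn]
      have h2 : |sgn (ε i)| = 1 := by cases ε i <;> simp [sgn]
      rw [abs_mul, abs_div, h1, h2]
      simp
    simp only [this]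
    simp [hn0.ne']
  have hfn : ∀ ε, ‖f ε‖ ≤ 1 + δ₀ := by
    intro ε
    have := norm_comb_le hx1 (g ε) (hg1 ε) zero_le_one
    linarith
  have hdeg : degLE f d := by
    intro A hA
    unfold coeff
    simp only [hf, Finset.smul_sum, smul_smul]
    rw [Finset.sum_comm]
    refine Finset.sum_eq_zero fun δ _ => ?_
    rw [← Finset.sum_smul, ← Finset.mul_sum]
    have := low_eval (fun i => sgn (δ i) / n) P d (by simp [hP]) A hA
    simp only [hg, this, mul_zero, zero_smul]
  have hlap : ∀ ε, (1 - 3 * δ₀) * ((1 - η / 2) * (d : ℝ) ^ 2) ≤ ‖lap f ε‖ := by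
    intro ε
    have h1 : lap f ε = ∑ δ, (∑ i : Fin n,
        (2 : ℝ)⁻¹ * (g ε δ - g (Function.update ε i (!(ε i))) δ)) • x δ := by
      rw [lap_eq]
      simp only [pderiv, hf, ← Finset.sum_sub_distrib, ← sub_smul, Finset.smul_sum, smul_smul,
        Finset.sum_smul]
      rw [Finset.sum_comm]
    have h2 := le_norm_comb (by linarith) hx1 hx2 (fun δ => ∑ i : Fin n,
        (2 : ℝ)⁻¹ * (g ε δ - g (Function.update ε i (!(ε i))) δ)) ε
    rw [← h1] at h2
    refine le_trans ?_ h2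
    have h3 : g ε ε = P.eval 1 := by
      simp only [hg, div_mul_eq_mul_div, sgn_mul_self]
      simp [hn0.ne']
    have h4 : ∀ i, g (Function.update ε i (!(ε i))) ε = P.eval (1 - 2 / (n : ℝ)) := by
      intro i
      simp only [hg]
      congr 1
      have h5 : ∀ j, sgn (ε j) / n * sgn (Function.update ε i (!(ε i)) j)
          = 1 / (n : ℝ) - if j = i then 2 / (n : ℝ) else 0 := by
        intro j
        by_cases hj : j = i
        · subst hj
          rw [Function.update_self, if_pos rfl]
          cases ε j <;> simp [sgn] <;> ring
        · rw [Function.update_of_ne hj, if_neg hj, div_mul_eq_mul_div, sgn_mul_self, sub_zero]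
      simp only [h5, Finset.sum_sub_distrib]
      simp [hn0.ne']
    simp only [h3, h4]
    simp only [Finset.sum_const, Finset.card_univ, Fintype.card_fin, nsmul_eq_mul]
    have h6 : (0 : ℝ) ≤ 1 - 3 * δ₀ := by linarith
    gcongr
    refine le_trans hn.le (le_trans (le_of_eq ?_) (le_abs_self _))
    ring
  have hK : 0 ≤ (1 - 3 * δ₀) * ((1 - η / 2) * (d : ℝ) ^ 2) := by
    apply mul_nonneg (by linarith)
    apply mul_nonneg (by linarith)
    positivity
  have h1 := le_lpNormE hp (lap f) hK hlap
  have h2 := lpNormE_le hp f hfn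
  have h3 := H n hdn f hdeg
  have h4 : (1 - η) * (d : ℝ) ^ 2 * lpNormE p f ≤ (1 - η) * (d : ℝ) ^ 2 * (1 + δ₀) := by
    apply mul_le_mul_of_nonneg_left h2
    apply mul_nonneg (by linarith)
    positivity
  have h5 : (1 - 3 * δ₀) * (1 - η / 2) * (d : ℝ) ^ 2 ≤ (1 - η) * (1 + δ₀) * (d : ℝ) ^ 2 := by
    linarith
  have h6 := le_of_mul_le_mul_right h5 (by linarith)
  nlinarith

/-- **Theorem (improved Bernstein–Markov forces finite cotype).** -/
theorem stmt4 {X : Type*} [NormedAddCommGroup X] [NormedSpace ℂ X] [CompleteSpace X]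
    (p : ℝ≥0∞) (hp : 1 ≤ p) (η : ℝ) (hη0 : 0 < η) (hη1 : η < 1) (d : ℕ) (hd : 1 ≤ d)
    (H : ∀ n : ℕ, d ≤ n → ∀ f : (Fin n → Bool) → X, degLE f d →
      lpNormE p (lap f) ≤ (1 - η) * (d : ℝ) ^ 2 * lpNormE p f) :
    ∃ q : ℝ, 2 ≤ q ∧ ∃ C : ℝ, 0 < C ∧ HasCotype X q C := by
  obtain ⟨n, hn, c, hc0, hc1, hQ⟩ := cheb_contra p hp η hη0 hη1 d hd H
  have h2 : 2 ≤ Fintype.card (Fin n → Bool) := by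
    simp only [Fintype.card_fun, Fintype.card_bool, Fintype.card_fin]
    calc 2 = 2 ^ 1 := rfl
      _ ≤ 2 ^ n := Nat.pow_le_pow_right (by norm_num) hn
  exact cotype_of_Q h2 hc0 hc1 (Q_equiv (Fintype.equivFin _) hc0.le hQ)

end HammingCube
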